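/- Let I ⊂ ℝ be a bounded interval of positive length |I| and let J ⊆ I be a measurable set with Lebesgue measure |J| > 0. Let D_I = {z ∈ ℂ : dist(z, I) < 4·|I|}, and let Φ be a bounded analytic function on D_I that is not identically zero. Set M = sup_{z ∈ D_I} |Φ(z)| and m = sup_{x ∈ I} |Φ(x)|. Then ∫_I |Φ(s)|² ds ≤ (300·|I|/|J|)^{2·ln(M/m)/ln 2 + 1} · ∫_J |Φ(s)|² ds. -/

import Mathlib

open MeasureTheory Set Complex

noncomputable section

/-!
Let `t` maximize `‖Φ‖` on `I`, put `L = |I|`, and choose `k` with `M < 2 ^ (k + 1) * m`. A subset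
of `I` of measure greater than `ε` contains `k + 1` points with gaps at least `ε / (k + 1)`.
Interpolate `Φ` at these points. By Hermite's integral formula on the circle of radius `7 / 2 * L`
around `t`, the interpolation error at `t` is at most `M * (2 / 5) ^ (k + 1) < 4 / 5 * m`, whereas
the separation of the nodes bounds the sum of the absolute values of the Lagrange basis at `t`
by `e * (2 * e * L / ε) ^ k`. Hence `‖Φ‖` cannot be smaller than `m / 15 * (ε / (6 * L)) ^ k` on the
whole subset. With `ε = |J| / 4`, the lower bound therefore holds on at least three quarters
of `J`, and integrating it there gives the claim.
-/

section LagrangeNodes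

theorem prod_erase_range_abs_sub {k j : ℕ} (hj : j ≤ k) :
    ∏ i ∈ (Finset.range (k + 1)).erase j, |(j : ℝ) - i| = j.factorial * (k - j).factorial := by
  induction k, hj using Nat.le_induction with
  | base =>
    have hterm : ∀ i ∈ Finset.range j, |(j : ℝ) - (j - 1 - i : ℕ)| = (i + 1 : ℕ) := by
      intro i hi
      rw [Finset.mem_range] at hi
      rw [← Nat.cast_sub (by omega), Nat.abs_cast, show j - (j - 1 - i) = i + 1 by omega]
    rw [Finset.range_add_one, Finset.erase_insert Finset.notMem_range_self,
      ← Finset.prod_range_reflect, Finset.prod_congr rfl hterm, ← Nat.cast_prod,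
      Finset.prod_range_add_one_eq_factorial, Nat.sub_self, Nat.factorial_zero, Nat.cast_one,
      mul_one]
  | succ n hjn ih =>
    rw [Finset.range_add_one, Finset.erase_insert_of_ne (by omega),
      Finset.prod_insert (by simp), ih, abs_sub_comm, ← Nat.cast_sub (by omega), Nat.abs_cast,
      Nat.succ_sub hjn, Nat.factorial_succ]
    push_cast
    ring

theorem sum_range_one_div_factorial_mul_factorial (k : ℕ) :
    ∑ j ∈ Finset.range (k + 1), (1 : ℝ) / (j.factorial * (k - j).factorial) =
      2 ^ k / k.factorial := by
  have hk : (k.factorial : ℝ) ≠ 0 := mod_cast k.factorial_ne_zero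
  have hchoose : (2 : ℝ) ^ k = ∑ j ∈ Finset.range (k + 1), (k.choose j : ℝ) :=
    mod_cast (Nat.sum_range_choose k).symm
  rw [eq_div_iff hk, Finset.sum_mul, hchoose]
  refine Finset.sum_congr rfl fun j hj ↦ ?_
  rw [Nat.cast_choose ℝ (Finset.mem_range_succ_iff.1 hj), one_div_mul_eq_div]

theorem norm_eval_basis_range_le {𝕜 : Type*} [NormedField 𝕜] {k j : ℕ} {x : ℕ → 𝕜} {t : 𝕜}
    {δ L : ℝ} (hδ : 0 < δ) (hsep : ∀ i ≤ k, ∀ j ≤ k, |(i : ℝ) - j| * δ ≤ ‖x i - x j‖)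
    (hL : ∀ i ≤ k, ‖t - x i‖ ≤ L) (hj : j ≤ k) :
    ‖(Lagrange.basis (Finset.range (k + 1)) x j).eval t‖ ≤
      (L / δ) ^ k * (1 / (j.factorial * (k - j).factorial)) := by
  have hcard : ((Finset.range (k + 1)).erase j).card = k := by
    rw [Finset.card_erase_of_mem (Finset.mem_range_succ_iff.2 hj), Finset.card_range,
      Nat.add_one_sub_one]
  have hL0 : 0 ≤ L := (norm_nonneg _).trans (hL j hj)
  calc ‖(Lagrange.basis (Finset.range (k + 1)) x j).eval t‖
      = ∏ i ∈ (Finset.range (k + 1)).erase j, ‖t - x i‖ / ‖x j - x i‖ := by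
        simp [Lagrange.basis, Lagrange.basisDivisor, Polynomial.eval_prod, norm_prod,
          div_eq_inv_mul]
    _ ≤ ∏ i ∈ (Finset.range (k + 1)).erase j, L / δ * |(j : ℝ) - i|⁻¹ := by
        refine Finset.prod_le_prod (fun _ _ ↦ by positivity) fun i hi ↦ ?_
        obtain ⟨hij, hik⟩ := Finset.mem_erase.1 hi
        rw [Finset.mem_range_succ_iff] at hik
        have hpos : 0 < |(j : ℝ) - i| := abs_pos.2 (sub_ne_zero.2 (mod_cast hij.symm))
        calc ‖t - x i‖ / ‖x j - x i‖ ≤ L / (|(j : ℝ) - i| * δ) :=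
              div_le_div₀ hL0 (hL i hik) (by positivity) (hsep j hj i hik)
          _ = L / δ * |(j : ℝ) - i|⁻¹ := by rw [mul_comm, ← div_div, div_eq_mul_inv (L / δ)]
    _ = (L / δ) ^ k * (1 / (j.factorial * (k - j).factorial)) := by
        rw [Finset.prod_mul_distrib, Finset.prod_const, hcard, Finset.prod_inv_distrib,
          prod_erase_range_abs_sub hj, one_div]

theorem sum_norm_eval_basis_range_le {𝕜 : Type*} [NormedField 𝕜] {k : ℕ} {x : ℕ → 𝕜} {t : 𝕜}
    {δ L : ℝ} (hδ : 0 < δ) (hsep : ∀ i ≤ k, ∀ j ≤ k, |(i : ℝ) - j| * δ ≤ ‖x i - x j‖)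
    (hL : ∀ i ≤ k, ‖t - x i‖ ≤ L) :
    ∑ j ∈ Finset.range (k + 1), ‖(Lagrange.basis (Finset.range (k + 1)) x j).eval t‖ ≤
      (2 * L / δ) ^ k / k.factorial := by
  refine (Finset.sum_le_sum fun j hj ↦
    norm_eval_basis_range_le hδ hsep hL (Finset.mem_range_succ_iff.1 hj)).trans_eq ?_
  rw [← Finset.mul_sum, sum_range_one_div_factorial_mul_factorial, ← mul_div_assoc, ← mul_pow,
    div_mul_eq_mul_div, mul_comm L]

theorem injOn_range_of_abs_sub_mul_le_norm {E : Type*} [SeminormedAddCommGroup E] {k : ℕ}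
    {x : ℕ → E} {δ : ℝ} (hδ : 0 < δ)
    (hsep : ∀ i ≤ k, ∀ j ≤ k, |(i : ℝ) - j| * δ ≤ ‖x i - x j‖) :
    InjOn x (Finset.range (k + 1)) := by
  intro i hi j hj hij
  simp only [Finset.coe_range, mem_Iio, Nat.lt_succ_iff] at hi hj
  have hle := hsep i hi j hj
  rw [hij, sub_self, norm_zero] at hle
  have habs : |(i : ℝ) - j| = 0 := (nonpos_of_mul_nonpos_left hle hδ).antisymm (abs_nonneg _)
  exact_mod_cast sub_eq_zero.1 (abs_eq_zero.1 habs)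

theorem sum_norm_eval_basis_range_le_exp {𝕜 : Type*} [NormedField 𝕜] {k : ℕ} {x : ℕ → 𝕜} {t : 𝕜}
    {ε L : ℝ} (hε : 0 < ε) (hsep : ∀ i ≤ k, ∀ j ≤ k, |(i : ℝ) - j| * (ε / (k + 1)) ≤ ‖x i - x j‖)
    (hL : ∀ i ≤ k, ‖t - x i‖ ≤ L) :
    ∑ j ∈ Finset.range (k + 1), ‖(Lagrange.basis (Finset.range (k + 1)) x j).eval t‖ ≤
      Real.exp 1 * (2 * Real.exp 1 * L / ε) ^ k := by
  have hexp := Real.pow_div_factorial_le_exp (k + 1) (by positivity) k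
  have hL0 : 0 ≤ L := (norm_nonneg _).trans (hL 0 (Nat.zero_le k))
  calc _ ≤ (2 * L / (ε / (k + 1))) ^ k / k.factorial :=
        sum_norm_eval_basis_range_le (by positivity) hsep hL
    _ = (2 * L / ε) ^ k * (((k : ℝ) + 1) ^ k / k.factorial) := by
        rw [div_div_eq_mul_div, mul_div_right_comm, mul_pow, mul_div_assoc]
    _ ≤ (2 * L / ε) ^ k * Real.exp (k + 1) := by gcongr
    _ = Real.exp 1 * (2 * Real.exp 1 * L / ε) ^ k := by
        rw [Real.exp_add, ← Real.exp_one_pow,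
          show 2 * Real.exp 1 * L / ε = Real.exp 1 * (2 * L / ε) by ring, mul_pow]
        ring

end LagrangeNodes

section Hermite

variable {ι F E : Type*} [DecidableEq ι] {s : Finset ι}

theorem eval_basis_mul_sub [Field F] {v : ι → F} {i : ι} (hi : i ∈ s) (t : F) :
    (Lagrange.basis s v i).eval t * (t - v i) =
      (Lagrange.nodal s v).eval t * Lagrange.nodalWeight s v i := by
  rw [Lagrange.basis_eq_prod_sub_inv_mul_nodal_div hi, ← Lagrange.nodal_erase_eq_nodal_div hi,
    Lagrange.nodal_eq_mul_nodal_erase hi]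
  simp only [Polynomial.eval_mul, Polynomial.eval_C, Polynomial.eval_sub, Polynomial.eval_X]
  ring

theorem inv_sub_sub_sum_eval_basis_mul_inv_sub [Field F] {v : ι → F} (hv : InjOn v s)
    {t z : F} (hzt : z ≠ t) (hz : ∀ i ∈ s, z ≠ v i) :
    (z - t)⁻¹ - ∑ i ∈ s, (Lagrange.basis s v i).eval t * (z - v i)⁻¹ =
      (Lagrange.nodal s v).eval t / ((Lagrange.nodal s v).eval z * (z - t)) := by
  obtain rfl | hs := s.eq_empty_or_nonempty
  · simp
  have hsum : ∑ i ∈ s, (Lagrange.basis s v i).eval t = 1 := by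
    rw [← Polynomial.eval_finsetSum, Lagrange.sum_basis hv hs, Polynomial.eval_one]
  have hnodal : (Lagrange.nodal s v).eval z * ∑ i ∈ s, Lagrange.nodalWeight s v i * (z - v i)⁻¹ =
      1 := by
    simpa only [Pi.one_apply, Lagrange.interpolate_one hv hs, Polynomial.eval_one, mul_one] using
      (Lagrange.eval_interpolate_not_at_node 1 hz).symm
  have hterm : ∀ i ∈ s, (Lagrange.basis s v i).eval t * ((z - t)⁻¹ - (z - v i)⁻¹) =
      (Lagrange.nodal s v).eval t * (z - t)⁻¹ * (Lagrange.nodalWeight s v i * (z - v i)⁻¹) := by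
    intro i hi
    rw [inv_sub_inv (sub_ne_zero.2 hzt) (sub_ne_zero.2 (hz i hi)), sub_sub_sub_cancel_left,
      div_eq_mul_inv, ← mul_assoc, eval_basis_mul_sub hi, mul_inv]
    ring
  calc (z - t)⁻¹ - ∑ i ∈ s, (Lagrange.basis s v i).eval t * (z - v i)⁻¹
      = ∑ i ∈ s, (Lagrange.basis s v i).eval t * ((z - t)⁻¹ - (z - v i)⁻¹) := by
        simp only [mul_sub, Finset.sum_sub_distrib]
        rw [← Finset.sum_mul, hsum, one_mul]
    _ = (Lagrange.nodal s v).eval t / ((Lagrange.nodal s v).eval z * (z - t)) := by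
        rw [Finset.sum_congr rfl hterm, ← Finset.mul_sum, eq_inv_of_mul_eq_one_right hnodal,
          div_eq_mul_inv, mul_inv]
        ring

variable [NormedAddCommGroup E] [NormedSpace ℂ E] [CompleteSpace E]

theorem hermite_remainder {v : ι → ℂ} (hv : InjOn v s) {f : ℂ → E} {c t : ℂ} {R : ℝ}
    (hf : DiffContOnCl ℂ f (Metric.ball c R)) (ht : t ∈ Metric.ball c R)
    (hvR : ∀ i ∈ s, v i ∈ Metric.ball c R) :
    f t - ∑ i ∈ s, (Lagrange.basis s v i).eval t • f (v i) =
      (2 * Real.pi * I : ℂ)⁻¹ • ∮ z in C(c, R),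
        ((Lagrange.nodal s v).eval t / ((Lagrange.nodal s v).eval z * (z - t))) • f z := by
  have hR : 0 < R := Metric.pos_of_mem_ball ht
  have hne : ∀ w ∈ Metric.ball c R, ∀ z ∈ Metric.sphere c R, z ≠ w := by
    rintro w hw z hz rfl
    exact (Metric.mem_ball.1 hw).ne hz
  have hint : ∀ w ∈ Metric.ball c R, CircleIntegrable (fun z ↦ (z - w)⁻¹ • f z) c R := by
    intro w hw
    refine ContinuousOn.circleIntegrable hR.le (ContinuousOn.smul ?_ ?_)
    · exact ContinuousOn.inv₀ (by fun_prop) fun z hz ↦ sub_ne_zero.2 (hne w hw z hz)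
    · exact hf.continuousOn_ball.mono Metric.sphere_subset_closedBall
  have hkernel : EqOn
      (fun z ↦ ((Lagrange.nodal s v).eval t / ((Lagrange.nodal s v).eval z * (z - t))) • f z)
      (fun z ↦ (z - t)⁻¹ • f z -
        ∑ i ∈ s, (Lagrange.basis s v i).eval t • ((z - v i)⁻¹ • f z)) (Metric.sphere c R) := by
    intro z hz
    simp only [smul_smul, ← Finset.sum_smul, ← sub_smul]
    rw [inv_sub_sub_sum_eval_basis_mul_inv_sub hv (hne t ht z hz)
      fun i hi ↦ hne _ (hvR i hi) z hz]
  have hterm : ∀ i ∈ s, CircleIntegrable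
      (fun z ↦ (Lagrange.basis s v i).eval t • ((z - v i)⁻¹ • f z)) c R :=
    fun i hi ↦ (hint _ (hvR i hi)).continuousOn_smul continuousOn_const
  rw [circleIntegral.integral_congr hR.le hkernel,
    circleIntegral.integral_sub (hint t ht) (CircleIntegrable.fun_sum s hterm),
    circleIntegral.integral_fun_sum hterm, eq_inv_smul_iff₀ two_pi_I_ne_zero, smul_sub,
    hf.circleIntegral_sub_inv_smul ht, Finset.smul_sum]
  congr 1
  refine Finset.sum_congr rfl fun i hi ↦ ?_
  rw [circleIntegral.integral_smul, hf.circleIntegral_sub_inv_smul (hvR i hi), smul_comm]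

theorem norm_sub_sum_eval_basis_smul_le {v : ι → ℂ} (hv : InjOn v s) {f : ℂ → E} {t : ℂ}
    {L M R : ℝ} (hLR : L < R) (hR : 0 < R) (hf : DiffContOnCl ℂ f (Metric.ball t R))
    (hM : ∀ z ∈ Metric.sphere t R, ‖f z‖ ≤ M) (hvL : ∀ i ∈ s, ‖t - v i‖ ≤ L) :
    ‖f t - ∑ i ∈ s, (Lagrange.basis s v i).eval t • f (v i)‖ ≤ M * (L / (R - L)) ^ s.card := by
  have hball : ∀ i ∈ s, v i ∈ Metric.ball t R := fun i hi ↦ by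
    rw [Metric.mem_ball', dist_eq_norm]
    exact (hvL i hi).trans_lt hLR
  have hnodal_t : ‖(Lagrange.nodal s v).eval t‖ ≤ L ^ s.card := by
    rw [Lagrange.eval_nodal, norm_prod, ← Finset.prod_const]
    exact Finset.prod_le_prod (fun _ _ ↦ norm_nonneg _) hvL
  have hnodal : ∀ z ∈ Metric.sphere t R, (R - L) ^ s.card ≤ ‖(Lagrange.nodal s v).eval z‖ := by
    intro z hz
    rw [Lagrange.eval_nodal, norm_prod, ← Finset.prod_const]
    refine Finset.prod_le_prod (fun _ _ ↦ sub_nonneg.2 hLR.le) fun i hi ↦ ?_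
    have hzt : ‖z - t‖ = R := mem_sphere_iff_norm.1 hz
    linarith [hvL i hi, norm_sub_le_norm_sub_add_norm_sub z (v i) t, norm_sub_rev t (v i)]
  rw [hermite_remainder hv hf (Metric.mem_ball_self hR) hball]
  have hkernel : ∀ z ∈ Metric.sphere t R,
      ‖((Lagrange.nodal s v).eval t / ((Lagrange.nodal s v).eval z * (z - t))) • f z‖ ≤
        L ^ s.card / ((R - L) ^ s.card * R) * M := by
    intro z hz
    have : 0 < R - L := sub_pos.2 hLR
    rw [norm_smul, norm_div, norm_mul, mem_sphere_iff_norm.1 hz]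
    have : 0 ≤ M := (norm_nonneg _).trans (hM z hz)
    have hL0 : 0 ≤ L ^ s.card := (norm_nonneg _).trans hnodal_t
    gcongr
    · exact hnodal z hz
    · exact hM z hz
  refine (circleIntegral.norm_two_pi_i_inv_smul_integral_le_of_norm_le_const hR.le
    hkernel).trans_eq ?_
  have hRL : R - L ≠ 0 := (sub_pos.2 hLR).ne'
  rw [div_pow]
  field_simp

end Hermite

section SeparatedPoints

theorem exists_mem_lt_volume_inter_Ici {S : Set ℝ} {r δ : ℝ} (hS : BddBelow S) (hr : 0 ≤ r)
    (hδ : 0 ≤ δ) (hvol : ENNReal.ofReal (r + δ) < volume S) :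
    ∃ y ∈ S, ENNReal.ofReal r < volume (S ∩ Ici (y + δ)) := by
  obtain ⟨q, -, hrq, hqS⟩ := ENNReal.lt_iff_exists_real_btwn.1 hvol
  rw [ENNReal.ofReal_lt_ofReal_iff_of_nonneg (by positivity)] at hrq
  obtain ⟨y, hyS, hy⟩ : ∃ y ∈ S, y < sInf S + (q - (r + δ)) :=
    exists_lt_of_csInf_lt (nonempty_of_measure_ne_zero (pos_of_gt hvol).ne')
      (lt_add_of_pos_right _ (sub_pos.2 hrq))
  have hcover : S ⊆ Icc (sInf S) (y + δ) ∪ (S ∩ Ici (y + δ)) := fun z hz ↦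
    (le_total z (y + δ)).imp (fun h ↦ ⟨csInf_le hS hz, h⟩) fun h ↦ ⟨hz, h⟩
  refine ⟨y, hyS, ?_⟩
  by_contra! hle
  refine hqS.not_ge ?_
  calc volume S ≤ volume (Icc (sInf S) (y + δ)) + volume (S ∩ Ici (y + δ)) :=
        (measure_mono hcover).trans (measure_union_le _ _)
    _ ≤ ENNReal.ofReal (y + δ - sInf S) + ENNReal.ofReal r := by
        rw [Real.volume_Icc]
        gcongr
    _ ≤ ENNReal.ofReal q := by
        rw [← ENNReal.ofReal_add (by linarith [csInf_le hS hyS]) hr]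
        exact ENNReal.ofReal_le_ofReal (by linarith)

theorem exists_seq_mem_of_mul_lt_volume {k : ℕ} {S : Set ℝ} {δ : ℝ} (hS : BddBelow S)
    (hδ : 0 ≤ δ) (hvol : ENNReal.ofReal (k * δ) < volume S) :
    ∃ x : ℕ → ℝ, (∀ i ≤ k, x i ∈ S) ∧ ∀ i j, i ≤ j → j ≤ k → (j - i) * δ ≤ x j - x i := by
  induction k generalizing S with
  | zero =>
    obtain ⟨y, hy⟩ := nonempty_of_measure_ne_zero (pos_of_gt hvol).ne'
    refine ⟨fun _ ↦ y, fun _ _ ↦ hy, fun i j hij hj ↦ ?_⟩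
    obtain rfl : j = 0 := Nat.le_zero.1 hj
    obtain rfl : i = 0 := Nat.le_zero.1 hij
    simp
  | succ k ih =>
    obtain ⟨y, hyS, hrest⟩ : ∃ y ∈ S, ENNReal.ofReal (k * δ) < volume (S ∩ Ici (y + δ)) :=
      exists_mem_lt_volume_inter_Ici hS (by positivity) hδ
        (by rwa [Nat.cast_succ, add_one_mul] at hvol)
    obtain ⟨x, hxS, hx⟩ := ih (hS.mono inter_subset_left) hrest
    refine ⟨fun i ↦ Nat.casesOn i y x, fun i hi ↦ ?_, fun i j hij hj ↦ ?_⟩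
    · cases i with
      | zero => exact hyS
      | succ i => exact (hxS i (by omega)).1
    · obtain _ | j := j
      · obtain rfl : i = 0 := Nat.le_zero.1 hij
        simp
      have hj' : j ≤ k := by omega
      obtain _ | i := i
      · have hx0 : y + δ ≤ x 0 := (hxS 0 (Nat.zero_le k)).2
        have hxj := hx 0 j (Nat.zero_le j) hj'
        change ((j + 1 : ℕ) - (0 : ℕ) : ℝ) * δ ≤ x j - y
        push_cast at hxj ⊢
        linarith
      · have hxj := hx i j (by omega) hj'
        push_cast
        linarith

theorem exists_seq_mem_abs_sub_mul_le {k : ℕ} {S : Set ℝ} {δ : ℝ} (hS : BddBelow S)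
    (hδ : 0 ≤ δ) (hvol : ENNReal.ofReal (k * δ) < volume S) :
    ∃ x : ℕ → ℝ, (∀ i ≤ k, x i ∈ S) ∧ ∀ i ≤ k, ∀ j ≤ k, |(i : ℝ) - j| * δ ≤ |x i - x j| := by
  obtain ⟨x, hxS, hx⟩ := exists_seq_mem_of_mul_lt_volume hS hδ hvol
  refine ⟨x, hxS, fun i hi j hj ↦ ?_⟩
  wlog hij : i ≤ j generalizing i j
  · rw [abs_sub_comm, abs_sub_comm (x i)]
    exact this j hj i hi (le_of_not_ge hij)
  · rw [abs_sub_comm, abs_sub_comm (x i), abs_of_nonneg (sub_nonneg.2 (Nat.cast_le.2 hij))]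
    exact (hx i j hij hj).trans (le_abs_self _)

end SeparatedPoints

section Remez

variable {E : Type*} [NormedAddCommGroup E] [NormedSpace ℂ E] [CompleteSpace E]
  {f : ℂ → E} {a b t M : ℝ}

theorem remez_norm_le {R c ε : ℝ} {S : Set ℝ} (k : ℕ) (hab : a < b)
    (hR : b - a < R) (ht : t ∈ Icc a b) (hf : DiffContOnCl ℂ f (Metric.ball t R))
    (hM : ∀ z ∈ Metric.sphere (t : ℂ) R, ‖f z‖ ≤ M) (hS : S ⊆ Icc a b) (hε : 0 < ε)
    (hεS : ENNReal.ofReal ε < volume S) (hc : ∀ x ∈ S, ‖f x‖ ≤ c) :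
    ‖f t‖ ≤ M * ((b - a) / (R - (b - a))) ^ (k + 1) +
      c * (Real.exp 1 * (2 * Real.exp 1 * (b - a) / ε) ^ k) := by
  have hδ : 0 < ε / (k + 1) := by positivity
  have hkδ : ENNReal.ofReal (k * (ε / (k + 1))) < volume S := by
    refine (ENNReal.ofReal_le_ofReal ?_).trans_lt hεS
    rw [← mul_div_assoc, div_le_iff₀ (by positivity)]
    linarith
  obtain ⟨x, hxS, hx⟩ := exists_seq_mem_abs_sub_mul_le (bddBelow_Icc.mono hS) hδ.le hkδ
  have hsep : ∀ i ≤ k, ∀ j ≤ k, |(i : ℝ) - j| * (ε / (k + 1)) ≤ ‖(x i : ℂ) - x j‖ := by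
    simpa only [← ofReal_sub, norm_real, Real.norm_eq_abs] using hx
  have hdist : ∀ i ≤ k, ‖(t : ℂ) - x i‖ ≤ b - a := by
    intro i hi
    rw [← ofReal_sub, norm_real]
    exact abs_sub_le_of_le_of_le ht.1 ht.2 (hS (hxS i hi)).1 (hS (hxS i hi)).2
  have hinj := injOn_range_of_abs_sub_mul_le_norm hδ hsep
  have hremainder := norm_sub_sum_eval_basis_smul_le hinj hR ((sub_pos.2 hab).trans hR) hf hM
    fun i hi ↦ hdist i (Finset.mem_range_succ_iff.1 hi)
  have hinterp : ‖∑ j ∈ Finset.range (k + 1),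
      (Lagrange.basis (Finset.range (k + 1)) (fun i ↦ (x i : ℂ)) j).eval (t : ℂ) • f (x j)‖ ≤
        c * (Real.exp 1 * (2 * Real.exp 1 * (b - a) / ε) ^ k) := by
    have hc0 : 0 ≤ c := (norm_nonneg _).trans (hc _ (hxS 0 (Nat.zero_le k)))
    refine (norm_sum_le_of_le _ fun j hj ↦ ?_).trans
      ((Finset.mul_sum _ _ _).symm.trans_le (mul_le_mul_of_nonneg_left
        (sum_norm_eval_basis_range_le_exp hε hsep hdist) hc0))
    rw [norm_smul, mul_comm]
    exact mul_le_mul_of_nonneg_right (hc _ (hxS j (Finset.mem_range_succ_iff.1 hj)))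
      (norm_nonneg _)
  rw [Finset.card_range] at hremainder
  exact (norm_le_norm_sub_add _ _).trans (add_le_add hremainder hinterp)

theorem volume_norm_lt_le {ε : ℝ} {k : ℕ} (hab : a < b) (ht : t ∈ Icc a b)
    (hf : DiffContOnCl ℂ f (Metric.ball t (7 / 2 * (b - a))))
    (hM : ∀ z ∈ Metric.sphere (t : ℂ) (7 / 2 * (b - a)), ‖f z‖ ≤ M)
    (hk : M < 2 ^ (k + 1) * ‖f t‖) (hε : 0 < ε) :
    volume {x ∈ Icc a b | ‖f x‖ < ‖f t‖ / 15 * (ε / (6 * (b - a))) ^ k} ≤ ENNReal.ofReal ε := by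
  by_contra! hlt
  have hL : 0 < b - a := sub_pos.2 hab
  have hremez := remez_norm_le k hab (by linarith) ht hf hM (sep_subset _ _) hε hlt
    fun x hx ↦ hx.2.le
  have hratio : (b - a) / (7 / 2 * (b - a) - (b - a)) = 2 / 5 := by
    field_simp
    norm_num
  -- Each doubling allowed for `M` is paid for by one factor `2 / 5` of the remainder.
  have hremainder : M * (2 / 5) ^ (k + 1) < 4 / 5 * ‖f t‖ := by
    have : 0 ≤ ‖f t‖ := norm_nonneg _
    calc M * (2 / 5) ^ (k + 1) < 2 ^ (k + 1) * ‖f t‖ * (2 / 5) ^ (k + 1) := by gcongr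
      _ = (4 / 5) ^ (k + 1) * ‖f t‖ := by
          rw [mul_right_comm, ← mul_pow]
          norm_num
      _ ≤ 4 / 5 * ‖f t‖ := by
          gcongr
          exact pow_le_of_le_one (by norm_num) (by norm_num) k.succ_ne_zero
  -- With `exp 1 < 3`, the constant `15 = 3 * 5` leaves the nodes the missing fifth of `‖f t‖`.
  have hnodes : ‖f t‖ / 15 * (ε / (6 * (b - a))) ^ k *
      (Real.exp 1 * (2 * Real.exp 1 * (b - a) / ε) ^ k) ≤ 1 / 5 * ‖f t‖ := by
    calc _ ≤ ‖f t‖ / 15 * (ε / (6 * (b - a))) ^ k * (3 * (2 * 3 * (b - a) / ε) ^ k) := by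
          gcongr <;> exact Real.exp_one_lt_three.le
      _ = 1 / 5 * ‖f t‖ * (ε / (6 * (b - a)) * (2 * 3 * (b - a) / ε)) ^ k := by
          rw [mul_pow]
          ring
      _ = 1 / 5 * ‖f t‖ := by
          rw [show ε / (6 * (b - a)) * (2 * 3 * (b - a) / ε) = 1 by field_simp; norm_num,
            one_pow, mul_one]
  rw [hratio] at hremez
  linarith

end Remez

section Measure

theorem mul_measureReal_sub_le_setIntegral {α : Type*} {_ : MeasurableSpace α} {μ : Measure α}
    {s : Set α} {g : α → ℝ} (hs : μ s ≠ ⊤) (hg : 0 ≤ g) (hint : IntegrableOn g s μ) {c : ℝ}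
    (hc : 0 ≤ c) : c * (μ.real s - μ.real {x ∈ s | g x < c}) ≤ ∫ x in s, g x ∂μ := by
  have hle : μ.real s - μ.real {x ∈ s | g x < c} ≤ (μ.restrict s).real {x | c ≤ g x} := by
    have hcover : s ⊆ {x ∈ s | g x < c} ∪ {x | c ≤ g x} ∩ s := fun x hx ↦
      (lt_or_ge (g x) c).imp (fun h ↦ ⟨hx, h⟩) fun h ↦ ⟨h, hx⟩
    have hunion : μ.real s ≤ μ.real {x ∈ s | g x < c} + μ.real ({x | c ≤ g x} ∩ s) :=
      (measureReal_mono hcover (measure_ne_top_of_subset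
        (union_subset (sep_subset _ _) inter_subset_right) hs)).trans (measureReal_union_le _ _)
    have hrestrict : μ.real ({x | c ≤ g x} ∩ s) ≤ (μ.restrict s).real {x | c ≤ g x} :=
      ENNReal.toReal_mono
        (measure_ne_top_of_subset (subset_univ _) (by rwa [Measure.restrict_apply_univ]))
        (Measure.le_restrict_apply _ _)
    linarith
  exact (mul_le_mul_of_nonneg_left hle hc).trans
    (mul_meas_ge_le_integral_of_nonneg (ae_of_all _ hg) hint c)

end Measure

section Identity

variable {E : Type*} [NormedAddCommGroup E] [NormedSpace ℂ E] [CompleteSpace E]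

theorem exists_mem_Icc_apply_ne_zero {f : ℂ → E} {U : Set ℂ} {a b : ℝ} (hab : a < b)
    (hU : IsOpen U) (hUc : IsPreconnected U) (hIU : ∀ x ∈ Icc a b, (x : ℂ) ∈ U)
    (hf : DifferentiableOn ℂ f U) (hne : ∃ z ∈ U, f z ≠ 0) : ∃ x ∈ Icc a b, f (x : ℂ) ≠ 0 := by
  by_contra! hzero
  obtain ⟨z, hzU, hz⟩ := hne
  have hacc : (a : ℂ) ∈ closure ({z | f z = 0} \ {(a : ℂ)}) := by
    have ha : a ∈ closure (Ioc a b) := by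
      rw [closure_Ioc hab.ne]
      exact left_mem_Icc.2 hab.le
    refine map_mem_closure continuous_ofReal ha fun x hx ↦ ⟨hzero x (Ioc_subset_Icc_self hx), ?_⟩
    exact mt ofReal_injective.eq_iff.1 hx.1.ne'
  exact hz ((hf.analyticOnNhd hU).eqOn_zero_of_preconnected_of_mem_closure hUc
    (hIU a (left_mem_Icc.2 hab.le)) hacc hzU)

end Identity

section L2Estimate

variable {E : Type*} [NormedAddCommGroup E] [NormedSpace ℂ E] [CompleteSpace E]
  {f : ℂ → E} {a b t M : ℝ} {k : ℕ} {J : Set ℝ}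

theorem sq_mul_volume_le_setIntegral_norm_sq (hab : a < b) (ht : t ∈ Icc a b)
    (hf : DiffContOnCl ℂ f (Metric.ball t (7 / 2 * (b - a))))
    (hM : ∀ z ∈ Metric.sphere (t : ℂ) (7 / 2 * (b - a)), ‖f z‖ ≤ M)
    (hk : M < 2 ^ (k + 1) * ‖f t‖) (hJ : J ⊆ Icc a b) (hJpos : 0 < volume.real J) :
    (‖f t‖ / 15 * (volume.real J / (24 * (b - a))) ^ k) ^ 2 * (3 / 4 * volume.real J) ≤
      ∫ s in J, ‖f s‖ ^ 2 := by
  have : 0 < b - a := sub_pos.2 hab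
  have hball : ∀ s ∈ Icc a b, (s : ℂ) ∈ Metric.ball (t : ℂ) (7 / 2 * (b - a)) := by
    intro s hs
    rw [Metric.mem_ball, dist_eq_norm, ← ofReal_sub, norm_real]
    linarith [abs_sub_le_of_le_of_le hs.1 hs.2 ht.1 ht.2, Real.norm_eq_abs (s - t)]
  have hcont : ContinuousOn (fun s : ℝ ↦ ‖f s‖ ^ 2) (Icc a b) :=
    (hf.differentiableOn.continuousOn.comp continuous_ofReal.continuousOn hball).norm.pow 2
  have hint : IntegrableOn (fun s : ℝ ↦ ‖f s‖ ^ 2) J :=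
    (hcont.integrableOn_compact isCompact_Icc).mono_set hJ
  set c : ℝ := ‖f t‖ / 15 * (volume.real J / (24 * (b - a))) ^ k
  have hsublevel : volume.real {s ∈ J | ‖f s‖ ^ 2 < c ^ 2} ≤ volume.real J / 4 := by
    refine ENNReal.toReal_le_of_le_ofReal (by positivity) ?_
    have hsub : {s ∈ J | ‖f s‖ ^ 2 < c ^ 2} ⊆ {s ∈ Icc a b | ‖f s‖ < c} := fun s hs ↦
      ⟨hJ hs.1, lt_of_pow_lt_pow_left₀ 2 (by positivity) hs.2⟩
    have hvolume := volume_norm_lt_le hab ht hf hM hk (div_pos hJpos four_pos)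
    rw [div_div, ← mul_assoc, show (4 * 6 : ℝ) = 24 by norm_num] at hvolume
    exact (measure_mono hsub).trans hvolume
  calc c ^ 2 * (3 / 4 * volume.real J)
      ≤ c ^ 2 * (volume.real J - volume.real {s ∈ J | ‖f s‖ ^ 2 < c ^ 2}) := by
        gcongr
        linarith
    _ ≤ ∫ s in J, ‖f s‖ ^ 2 :=
        mul_measureReal_sub_le_setIntegral (measure_ne_top_of_subset hJ measure_Icc_lt_top.ne)
          (fun s ↦ sq_nonneg ‖f s‖) hint (sq_nonneg c)

theorem setIntegral_Icc_norm_sq_le (hab : a < b) (ht : t ∈ Icc a b)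
    (hmax : ∀ s ∈ Icc a b, ‖f s‖ ≤ ‖f t‖)
    (hf : DiffContOnCl ℂ f (Metric.ball t (7 / 2 * (b - a))))
    (hM : ∀ z ∈ Metric.sphere (t : ℂ) (7 / 2 * (b - a)), ‖f z‖ ≤ M)
    (hk : M < 2 ^ (k + 1) * ‖f t‖) (hJ : J ⊆ Icc a b) (hJpos : 0 < volume.real J) :
    ∫ s in Icc a b, ‖f s‖ ^ 2 ≤
      (300 * (b - a) / volume.real J) ^ (2 * k + 1) * ∫ s in J, ‖f s‖ ^ 2 := by
  have hL : 0 < b - a := sub_pos.2 hab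
  have hupper : ∫ s in Icc a b, ‖f s‖ ^ 2 ≤ ‖f t‖ ^ 2 * (b - a) := by
    refine (Real.le_norm_self _).trans ((norm_setIntegral_le_of_norm_le_const
      measure_Icc_lt_top fun s hs ↦ ?_).trans_eq (by rw [Real.volume_real_Icc_of_le hab.le]))
    rw [norm_pow, norm_norm]
    exact pow_le_pow_left₀ (norm_nonneg _) (hmax s hs) 2
  have hlower := sq_mul_volume_le_setIntegral_norm_sq hab ht hf hM hk hJ hJpos
  set l := volume.real J
  have hcancel : (24 * (b - a) / l) ^ k * (l / (24 * (b - a))) ^ k = 1 := by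
    rw [← mul_pow, div_mul_div_cancel₀ hJpos.ne', div_self (by positivity), one_pow]
  calc ∫ s in Icc a b, ‖f s‖ ^ 2 ≤ ‖f t‖ ^ 2 * (b - a) := hupper
    _ = ‖f t‖ ^ 2 * (b - a) * ((24 * (b - a) / l) ^ k * (l / (24 * (b - a))) ^ k) ^ 2 := by
        rw [hcancel, one_pow, mul_one]
    -- `300 = 15 ^ 2 * (4 / 3)`
    _ = (24 * (b - a) / l) ^ (2 * k) * (300 * (b - a) / l) *
          ((‖f t‖ / 15 * (l / (24 * (b - a))) ^ k) ^ 2 * (3 / 4 * l)) := by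
        rw [mul_comm 2 k, pow_mul]
        field_simp
        ring
    _ ≤ (300 * (b - a) / l) ^ (2 * k) * (300 * (b - a) / l) * ∫ s in J, ‖f s‖ ^ 2 := by
        gcongr
        norm_num
    _ = (300 * (b - a) / l) ^ (2 * k + 1) * ∫ s in J, ‖f s‖ ^ 2 := by rw [pow_succ]

end L2Estimate

theorem lt_pow_floor_logb_add_one {x y : ℝ} (hx : 1 < x) (hy : 0 < y) :
    y < x ^ (⌊Real.logb x y⌋₊ + 1) := by
  rw [← Real.rpow_natCast, ← Real.logb_lt_iff_lt_rpow hx hy]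
  exact_mod_cast Nat.lt_floor_add_one _

theorem pow_two_mul_floor_logb_add_one_le_rpow {x y : ℝ} (hx : 1 ≤ x) (hy : 1 ≤ y) :
    x ^ (2 * ⌊Real.logb 2 y⌋₊ + 1) ≤ x ^ (2 * Real.log y / Real.log 2 + 1) := by
  rw [← Real.rpow_natCast, mul_div_assoc, Real.log_div_log]
  refine Real.rpow_le_rpow_of_exponent_le hx ?_
  push_cast
  gcongr
  exact Nat.floor_le (Real.logb_nonneg one_lt_two hy)

theorem kovrijkine_lemma_general {E : Type*} [NormedAddCommGroup E] [NormedSpace ℂ E]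
    [CompleteSpace E] {a b : ℝ} (hab : a < b) {J : Set ℝ} (hJsub : J ⊆ Icc a b)
    (hJpos : 0 < volume J) {Φ : ℂ → E} {M m : ℝ}
    (hΦanal : DifferentiableOn ℂ Φ (Metric.thickening (4 * (b - a)) (ofReal '' Icc a b)))
    (hM : ∀ z ∈ Metric.thickening (4 * (b - a)) (ofReal '' Icc a b), ‖Φ z‖ ≤ M)
    (hΦne : ∃ z ∈ Metric.thickening (4 * (b - a)) (ofReal '' Icc a b), Φ z ≠ 0)
    (hm : m = sSup ((fun x : ℝ => ‖Φ (x : ℂ)‖) '' Icc a b)) :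
    (∫ s in Icc a b, ‖Φ (s : ℂ)‖ ^ 2) ≤
      (300 * (b - a) / (volume J).toReal) ^ (2 * Real.log (M / m) / Real.log 2 + 1) *
        ∫ s in J, ‖Φ (s : ℂ)‖ ^ 2 := by
  have : 0 < b - a := sub_pos.2 hab
  set D := Metric.thickening (4 * (b - a)) (ofReal '' Icc a b)
  have hID : ∀ x ∈ Icc a b, (x : ℂ) ∈ D := fun x hx ↦
    Metric.self_subset_thickening (by positivity) _ (mem_image_of_mem _ hx)
  have hDconn : IsPreconnected D :=
    (((convex_Icc a b).linear_image ofRealCLM.toLinearMap).thickening _).isPreconnected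
  obtain ⟨t, ht, hmt, hmax⟩ := isCompact_Icc.exists_sSup_image_eq_and_ge
    (nonempty_Icc.2 hab.le) (hΦanal.continuousOn.comp continuous_ofReal.continuousOn hID).norm
  replace hmt : m = ‖Φ t‖ := hm.trans hmt
  obtain ⟨x, hx, hΦx⟩ :=
    exists_mem_Icc_apply_ne_zero hab Metric.isOpen_thickening hDconn hID hΦanal hΦne
  have hm0 : 0 < ‖Φ t‖ := (norm_pos_iff.2 hΦx).trans_le (hmax x hx)
  have hMm : 1 ≤ M / m := by
    rw [hmt, one_le_div hm0]
    exact hM t (hID t ht)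
  have hballD : Metric.closedBall (t : ℂ) (7 / 2 * (b - a)) ⊆ D := fun z hz ↦
    Metric.mem_thickening_iff.2 ⟨t, mem_image_of_mem _ ht, hz.trans_lt (by linarith)⟩
  have hJfin : volume J ≠ ⊤ := measure_ne_top_of_subset hJsub measure_Icc_lt_top.ne
  have hJpos' : 0 < volume.real J := ENNReal.toReal_pos hJpos.ne' hJfin
  have hJle : volume.real J ≤ b - a := by
    rw [← Real.volume_real_Icc_of_le hab.le]
    exact measureReal_mono hJsub measure_Icc_lt_top.ne
  have hk : M < 2 ^ (⌊Real.logb 2 (M / m)⌋₊ + 1) * ‖Φ t‖ := by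
    rw [← div_lt_iff₀ hm0, ← hmt]
    exact lt_pow_floor_logb_add_one one_lt_two (one_pos.trans_le hMm)
  refine (setIntegral_Icc_norm_sq_le hab ht hmax (hΦanal.diffContOnCl_ball hballD)
    (fun z hz ↦ hM z (hballD (Metric.sphere_subset_closedBall hz))) hk hJsub hJpos').trans ?_
  exact mul_le_mul_of_nonneg_right (pow_two_mul_floor_logb_add_one_le_rpow
    ((one_le_div hJpos').2 (by linarith)) hMm) (by positivity)

theorem kovrijkine_lemma
    (a b : ℝ) (hab : a < b)
    (J : Set ℝ) (hJmeas : MeasurableSet J) (hJsub : J ⊆ Icc a b) (hJpos : 0 < volume J)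
    (Φ : ℂ → ℂ)
    (DI : Set ℂ) (hDI : DI = {z : ℂ | Metric.infDist z ((fun x : ℝ => (x : ℂ)) '' Icc a b) < 4 * (b - a)})
    (hΦanal : DifferentiableOn ℂ Φ DI)
    (hΦbdd : ∃ K : ℝ, ∀ z ∈ DI, ‖Φ z‖ ≤ K)
    (hΦne : ∃ z ∈ DI, Φ z ≠ 0)
    (M m : ℝ)
    (hM : M = sSup ((fun z => ‖Φ z‖) '' DI))
    (hm : m = sSup ((fun x : ℝ => ‖Φ (x : ℂ)‖) '' Icc a b)) :
    (∫ s in Icc a b, ‖Φ (s : ℂ)‖ ^ 2) ≤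
      (300 * (b - a) / (volume J).toReal) ^ (2 * Real.log (M / m) / Real.log 2 + 1) *
        ∫ s in J, ‖Φ (s : ℂ)‖ ^ 2 := by
  obtain rfl : DI = Metric.thickening (4 * (b - a)) (ofReal '' Icc a b) :=
    hDI.trans <| ext fun _ ↦ (Metric.mem_thickening_iff_infDist_lt
      ((nonempty_Icc.2 hab.le).image _)).symm
  exact kovrijkine_lemma_general hab hJsub hJpos hΦanal
    (fun z hz ↦ hM ▸ le_csSup (hΦbdd.imp fun _ ↦ forall_mem_image.2) ⟨z, hz, rfl⟩) hΦne hm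

end
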